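/- Let T_p be an invertible p×p binary matrix, n ≥ 0, N = 2^n·p, and T_N = T_2^{⊗n} ⊗ T_p. For every K ∈ {1,…,N} there exist nonnegative integers K_0,…,K_{2^n−1} with Σ_q K_q = K and K_q ≤ p, and subsets R_q ⊆ {0,…,p−1} with |R_q| = K_q and, whenever K_q ≥ 1, d(T_p^{(R_q)}) = S_{T_p}(K_q), such that the information set I = ∪_q { q·p + j : j ∈ R_q } satisfies d(T_N^{(I)}) = S_{T_N}(K). That is, the optimal minimum distance S_{T_N}(K) is always attained by an information set assembled sector-wise from optimal row sets of the kernel T_p. -/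

import Mathlib

/-!
Every word of the row space of `A ⊗ T_p` can be written `x = ∑_q A_q ⊗ F_q`, where `A_q` is row `q`
of `A = T₂^{⊗n}` and `F_q` lies in the span of the rows of `T_p` selected in sector `q`. The proof
rests on the formula
`d(T_N^{(I)}) = min { wt(A_q) · d(T_p^{(I_q)}) : I_q ≠ ∅ }`,
where `I_q` is the part of `I` in sector `q`.

* `≤` (`minDist_kron_le`): for a lightest word `y` in sector `q`, the word `A_q ⊗ y` lies in the code
  and has weight `wt(A_q) · wt(y)`.
* `≥` (`exists_sector_le`): if some `F_q` is nonzero, then some nonzero `F_q` satisfies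
  `wt(A_q) · wt(F_q) ≤ wt(∑_q A_q ⊗ F_q)`. This property of `A` (`SectorBound`) holds for `T₂` by
  the Plotkin argument `wt(u + v) + wt(u) ≥ wt(v)`, and it is inherited by Kronecker products.

An optimal `I` can therefore be changed sector by sector, replacing each `I_q` by a row set of `T_p`
of the same size with the largest minimum distance, without lowering the minimum distance.
-/

open Matrix

/-- If `i < a * b` then `b` is positive. -/
theorem kron_aux {a b i : ℕ} (h : i < a * b) : 0 < b := by
  rcases Nat.eq_zero_or_pos b with hb | hb
  · subst hb; simp at h
  · exact hb

/-- Kronecker product of binary matrices with flattened (0-indexed) indices: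
row `q * b + j` of `kron A B` is formed from row `q` of `A` and row `j` of `B`. -/
def kron {a b c d : ℕ} (A : Matrix (Fin a) (Fin c) (ZMod 2))
    (B : Matrix (Fin b) (Fin d) (ZMod 2)) :
    Matrix (Fin (a * b)) (Fin (c * d)) (ZMod 2) :=
  Matrix.of fun i j =>
    A ⟨(i : ℕ) / b, Nat.div_lt_of_lt_mul (lt_of_lt_of_le i.isLt (Nat.mul_comm a b).le)⟩
      ⟨(j : ℕ) / d, Nat.div_lt_of_lt_mul (lt_of_lt_of_le j.isLt (Nat.mul_comm c d).le)⟩ *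
    B ⟨(i : ℕ) % b, Nat.mod_lt _ (kron_aux i.isLt)⟩
      ⟨(j : ℕ) % d, Nat.mod_lt _ (kron_aux j.isLt)⟩

/-- The Arikan kernel `T₂ = [[1,0],[1,1]]`. -/
def T2 : Matrix (Fin 2) (Fin 2) (ZMod 2) := !![1, 0; 1, 1]

/-- `n`-fold Kronecker power. -/
def kronPow {p : ℕ} (T : Matrix (Fin p) (Fin p) (ZMod 2)) :
    (n : ℕ) → Matrix (Fin (p ^ n)) (Fin (p ^ n)) (ZMod 2)
  | 0 => 1
  | n + 1 => kron (kronPow T n) T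

/-- Minimum distance of the code generated by the rows of `T` indexed by `R`:
the least Hamming weight of a nonzero vector in the `𝔽₂`-span of those rows. -/
noncomputable def minDist {p m : ℕ} (T : Matrix (Fin p) (Fin m) (ZMod 2))
    (R : Finset (Fin p)) : ℕ :=
  sInf {w : ℕ | ∃ x ∈ Submodule.span (ZMod 2) ((fun i => T i) '' (R : Set (Fin p))),
    x ≠ 0 ∧ hammingNorm x = w}

/-- Minimum-distance spectrum: `spec T k` is the largest minimum distance achievable
by a sub-code generated by `k` rows of `T`. -/
noncomputable def spec {p m : ℕ} (T : Matrix (Fin p) (Fin m) (ZMod 2)) (k : ℕ) : ℕ :=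
  ((Finset.univ : Finset (Fin p)).powersetCard k).sup (minDist T)

theorem sector_lt {a b : ℕ} (q : Fin a) (j : Fin b) : (q : ℕ) * b + (j : ℕ) < a * b :=
  calc (q : ℕ) * b + (j : ℕ) < (q : ℕ) * b + b := Nat.add_lt_add_left j.isLt _
  _ = ((q : ℕ) + 1) * b := by ring
  _ ≤ a * b := Nat.mul_le_mul_right b q.isLt

/-! ### Hamming weights and Kronecker products -/

theorem hammingNorm_comp_equiv {α β : Type*} [Fintype α] [Fintype β] (e : α ≃ β)
    (x : β → ZMod 2) : hammingNorm (fun a => x (e a)) = hammingNorm x := by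
  classical
  simp only [hammingNorm]
  exact Finset.card_equiv e (by simp)

theorem hammingNorm_tensor {α β : Type*} [Fintype α] [Fintype β]
    (u : α → ZMod 2) (v : β → ZMod 2) :
    hammingNorm (fun ab : α × β => u ab.1 * v ab.2) = hammingNorm u * hammingNorm v := by
  classical
  simp only [hammingNorm]
  rw [← Finset.card_product]
  congr 1
  ext ⟨a, b⟩
  simp

theorem kron_apply {a b c d : ℕ} (A : Matrix (Fin a) (Fin c) (ZMod 2))
    (B : Matrix (Fin b) (Fin d) (ZMod 2)) (q : Fin a) (j : Fin b) (s : Fin c) (t : Fin d) :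
    kron A B (finProdFinEquiv (q, j)) (finProdFinEquiv (s, t)) = A q s * B j t := by
  have hb : 0 < b := j.pos
  have hd : 0 < d := t.pos
  simp only [kron, Matrix.of_apply, finProdFinEquiv_apply_val]
  congr 2
  all_goals
    ext
    simp [Nat.add_mul_div_left, Nat.div_eq_of_lt, Nat.mod_eq_of_lt, hb, hd]

theorem hammingNorm_kron_row {a b c d : ℕ} (A : Matrix (Fin a) (Fin c) (ZMod 2))
    (B : Matrix (Fin b) (Fin d) (ZMod 2)) (q : Fin a) (j : Fin b) :
    hammingNorm (kron A B (finProdFinEquiv (q, j))) = hammingNorm (A q) * hammingNorm (B j) := by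
  rw [← hammingNorm_comp_equiv finProdFinEquiv, ← hammingNorm_tensor]
  congr 1
  ext ⟨s, t⟩
  exact kron_apply A B q j s t

/-! ### The sector bound -/

/-- The rows of `A` are nonzero and, for every family of vectors `F_q` that is not identically zero,
the weight of `∑_q A_q ⊗ F_q` is at least `wt(A_q) · wt(F_q)` for some `q` with `F_q ≠ 0`. -/
def SectorBound {a c : ℕ} (A : Matrix (Fin a) (Fin c) (ZMod 2)) : Prop :=
  (∀ q, A q ≠ 0) ∧
  ∀ (ι : Type) [Fintype ι] (F : Fin a → ι → ZMod 2), (∃ q, F q ≠ 0) →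
    ∃ q, F q ≠ 0 ∧ hammingNorm (A q) * hammingNorm (F q) ≤
      hammingNorm (fun si : Fin c × ι => ∑ q, A q si.1 * F q si.2)

theorem sectorBound_one (m : ℕ) :
    SectorBound (1 : Matrix (Fin m) (Fin m) (ZMod 2)) := by
  classical
  refine ⟨fun q h => by simpa using congrFun h q, ?_⟩
  rintro ι _ F ⟨q, hq⟩
  refine ⟨q, hq, ?_⟩
  rw [← hammingNorm_tensor]
  simp only [hammingNorm]
  apply Finset.card_le_card
  rintro ⟨s, i⟩
  simp only [Matrix.one_apply]
  by_cases h : q = s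
  · subst h; simp
  · simp [h]

/-- The Plotkin bound: `∑_q (T₂)_q ⊗ F_q = (F₀ + F₁ | F₁)` weighs at least `wt(F₀)`, and exactly
`2 wt(F₁)` when `F₀ = 0`. -/
theorem sectorBound_T2 : SectorBound T2 := by
  classical
  refine ⟨fun q h => ?_, ?_⟩
  · have h1 : T2 q 0 = 1 := by fin_cases q <;> rfl
    simp [h] at h1
  rintro ι _ F ⟨q, hq⟩
  by_cases h0 : F 0 = 0
  · have h1 : F 1 ≠ 0 := by
      fin_cases q
      · exact absurd h0 hq
      · exact hq
    refine ⟨1, h1, ?_⟩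
    rw [← hammingNorm_tensor]
    simp [Fin.sum_univ_two, h0]
  · refine ⟨0, h0, ?_⟩
    have hw : hammingNorm (T2 0) = 1 := by decide
    rw [hw, one_mul]
    simp only [hammingNorm]
    -- A coordinate in the support of `F 0` is in the support of `F 0 + F 1` or of `F 1`.
    refine Finset.card_le_card_of_injOn
      (fun i => ((if F 1 i = 0 then 0 else 1 : Fin 2), i)) ?_ ?_
    · intro i hi
      by_cases h : F 1 i = 0 <;>
        simp_all [T2, Fin.sum_univ_two]
    · intro i _ j _ h
      exact (Prod.ext_iff.mp h).2

theorem sectorBound_kron {a b c d : ℕ} {A : Matrix (Fin a) (Fin c) (ZMod 2)}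
    {B : Matrix (Fin b) (Fin d) (ZMod 2)} (hA : SectorBound A) (hB : SectorBound B) :
    SectorBound (kron A B) := by
  classical
  refine ⟨fun k => ?_, ?_⟩
  · obtain ⟨⟨q, j⟩, rfl⟩ := finProdFinEquiv.surjective k
    rw [← hammingNorm_ne_zero_iff, hammingNorm_kron_row]
    exact mul_ne_zero (hammingNorm_ne_zero_iff.2 (hA.1 q)) (hammingNorm_ne_zero_iff.2 (hB.1 j))
  · rintro ι _ F ⟨k, hk⟩
    obtain ⟨⟨q₀, j₀⟩, rfl⟩ := finProdFinEquiv.surjective k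
    let G : Fin a → Fin d × ι → ZMod 2 :=
      fun q ti => ∑ j, B j ti.1 * F (finProdFinEquiv (q, j)) ti.2
    have hG : G q₀ ≠ 0 := by
      intro h
      obtain ⟨j, hj, hle⟩ := hB.2 ι (fun j => F (finProdFinEquiv (q₀, j))) ⟨j₀, hk⟩
      have hz : hammingNorm (G q₀) = 0 := by rw [h]; exact hammingNorm_zero
      have := Nat.le_zero.1 (hle.trans hz.le)
      exact mul_ne_zero (hammingNorm_ne_zero_iff.2 (hB.1 j)) (hammingNorm_ne_zero_iff.2 hj) this
    obtain ⟨q, hq, hle⟩ := hA.2 (Fin d × ι) G ⟨q₀, hG⟩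
    obtain ⟨j₁, hj₁⟩ : ∃ j, F (finProdFinEquiv (q, j)) ≠ 0 := by
      by_contra! h
      exact hq (by ext; simp [G, h])
    obtain ⟨j, hj, hle'⟩ := hB.2 ι (fun j => F (finProdFinEquiv (q, j))) ⟨j₁, hj₁⟩
    refine ⟨finProdFinEquiv (q, j), hj, ?_⟩
    rw [hammingNorm_kron_row, mul_assoc]
    refine (Nat.mul_le_mul_left _ hle').trans (hle.trans (le_of_eq ?_))
    rw [← hammingNorm_comp_equiv ((Equiv.prodAssoc _ _ _).symm.trans
      (Equiv.prodCongr finProdFinEquiv (Equiv.refl ι)))]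
    congr 1
    ext ⟨s, t, i⟩
    simp only [G, Equiv.trans_apply, Equiv.prodAssoc_symm_apply, Equiv.prodCongr_apply,
      Prod.map_apply, Equiv.refl_apply]
    rw [← finProdFinEquiv.sum_comp, Fintype.sum_prod_type]
    simp [kron_apply, Finset.mul_sum, mul_assoc]

theorem sectorBound_kronPow (n : ℕ) : SectorBound (kronPow T2 n) := by
  induction n with
  | zero => exact sectorBound_one _
  | succ n ih => exact sectorBound_kron ih sectorBound_T2

/-! ### Minimum distances sector by sector -/

theorem minDist_le {p m : ℕ} {T : Matrix (Fin p) (Fin m) (ZMod 2)} {R : Finset (Fin p)}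
    {x : Fin m → ZMod 2}
    (hx : x ∈ Submodule.span (ZMod 2) ((fun i => T i) '' (R : Set (Fin p)))) (h0 : x ≠ 0) :
    minDist T R ≤ hammingNorm x :=
  Nat.sInf_le ⟨x, hx, h0, rfl⟩

/-- Nonzero rows exclude the junk value `sInf ∅ = 0`, so the minimum distance is attained. -/
theorem exists_minDist {p m : ℕ} {T : Matrix (Fin p) (Fin m) (ZMod 2)} (hT : ∀ i, T i ≠ 0)
    {R : Finset (Fin p)} (hR : R.Nonempty) :
    ∃ x ∈ Submodule.span (ZMod 2) ((fun i => T i) '' (R : Set (Fin p))),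
      x ≠ 0 ∧ hammingNorm x = minDist T R := by
  obtain ⟨i, hi⟩ := hR
  exact Nat.sInf_mem (s := {w : ℕ | ∃ x ∈ Submodule.span (ZMod 2)
    ((fun i => T i) '' (R : Set (Fin p))), x ≠ 0 ∧ hammingNorm x = w})
    ⟨_, T i, Submodule.subset_span ⟨i, hi, rfl⟩, hT i, rfl⟩

/-- The part of a row set `I` of `A ⊗ B` lying in sector `q`, as a set of rows of `B`. -/
def sector {a b : ℕ} (I : Finset (Fin (a * b))) (q : Fin a) : Finset (Fin b) :=
  Finset.univ.filter fun j => finProdFinEquiv (q, j) ∈ I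

theorem mem_sector {a b : ℕ} {I : Finset (Fin (a * b))} {q : Fin a} {j : Fin b} :
    j ∈ sector I q ↔ finProdFinEquiv (q, j) ∈ I := by
  simp [sector]

theorem sum_card_sector {a b : ℕ} (I : Finset (Fin (a * b))) :
    ∑ q, (sector I q).card = I.card := by
  classical
  have h : I.card = ∑ k, if k ∈ I then 1 else 0 := by simp
  rw [h, ← finProdFinEquiv.sum_comp, Fintype.sum_prod_type]
  exact Finset.sum_congr rfl fun q _ => by rw [sector, Finset.card_filter]

/-- Lower bound: a nonzero word of the code weighs at least `wt(A_q) · d(B^{(I_q)})` for some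
nonempty sector `q`. -/
theorem exists_sector_le {a c b d : ℕ} {A : Matrix (Fin a) (Fin c) (ZMod 2)}
    (hA : SectorBound A) (B : Matrix (Fin b) (Fin d) (ZMod 2)) (I : Finset (Fin (a * b)))
    {x : Fin (c * d) → ZMod 2}
    (hx : x ∈ Submodule.span (ZMod 2) ((fun i => kron A B i) '' (I : Set (Fin (a * b)))))
    (h0 : x ≠ 0) :
    ∃ q, (sector I q).Nonempty ∧
      hammingNorm (A q) * minDist B (sector I q) ≤ hammingNorm x := by
  classical
  obtain ⟨w, rfl⟩ : ∃ w : Fin (a * b) → ZMod 2, ∑ i ∈ I, w i • kron A B i = x :=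
    (Submodule.mem_span_image_finset_iff_exists_fun' _).1 hx
  let F : Fin a → Fin d → ZMod 2 :=
    fun q => ∑ j ∈ sector I q, w (finProdFinEquiv (q, j)) • B j
  have hxF : ∀ s t, (∑ i ∈ I, w i • kron A B i) (finProdFinEquiv (s, t)) =
      ∑ q, A q s * F q t := by
    intro s t
    have hI : I = Finset.univ.filter (· ∈ I) := by simp
    rw [hI, Finset.sum_filter, ← finProdFinEquiv.sum_comp, Fintype.sum_prod_type]
    simp only [Finset.sum_apply, F, sector, Finset.sum_filter, Finset.mul_sum]
    refine Finset.sum_congr rfl fun q _ => Finset.sum_congr rfl fun j _ => ?_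
    split_ifs
    · simp only [Pi.smul_apply, smul_eq_mul, kron_apply]; ring
    · simp
  have hF : ∃ q, F q ≠ 0 := by
    by_contra! h
    apply h0
    ext k
    obtain ⟨⟨s, t⟩, rfl⟩ := finProdFinEquiv.surjective k
    rw [hxF]
    simp [h]
  obtain ⟨q, hq, hle⟩ := hA.2 (Fin d) F hF
  refine ⟨q, ?_, ?_⟩
  · by_contra h
    rw [Finset.not_nonempty_iff_eq_empty] at h
    exact hq (by simp [F, h])
  · have hmem : F q ∈ Submodule.span (ZMod 2)
        ((fun i => B i) '' (sector I q : Set (Fin b))) :=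
      Submodule.sum_mem _ fun j hj =>
        Submodule.smul_mem _ _ (Submodule.subset_span ⟨j, hj, rfl⟩)
    refine (Nat.mul_le_mul_left _ (minDist_le hmem hq)).trans (hle.trans (le_of_eq ?_))
    rw [← hammingNorm_comp_equiv finProdFinEquiv]
    congr 1
    ext ⟨s, t⟩
    exact (hxF s t).symm

/-- Upper bound: the words `A_q ⊗ y`, with `y` in the code of sector `q`, lie in the code. -/
theorem minDist_kron_le {a c b d : ℕ} {A : Matrix (Fin a) (Fin c) (ZMod 2)}
    (hA : ∀ q, A q ≠ 0) {B : Matrix (Fin b) (Fin d) (ZMod 2)} (hB : ∀ j, B j ≠ 0)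
    (I : Finset (Fin (a * b))) {q : Fin a} (hq : (sector I q).Nonempty) :
    minDist (kron A B) I ≤ hammingNorm (A q) * minDist B (sector I q) := by
  obtain ⟨y, hy, hy0, hyw⟩ := exists_minDist hB hq
  let L : (Fin d → ZMod 2) →ₗ[ZMod 2] (Fin (c * d) → ZMod 2) :=
    { toFun := fun y k => A q (finProdFinEquiv.symm k).1 * y (finProdFinEquiv.symm k).2
      map_add' := fun y z => by ext k; simp [mul_add]
      map_smul' := fun r y => by ext k; simp [mul_left_comm] }
  have hLw : hammingNorm (L y) = hammingNorm (A q) * hammingNorm y := by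
    rw [← hammingNorm_comp_equiv finProdFinEquiv, ← hammingNorm_tensor]
    congr 1
    ext ⟨s, t⟩
    simp only [L, LinearMap.coe_mk, AddHom.coe_mk, Equiv.symm_apply_apply]
  have hsub : Submodule.span (ZMod 2) ((fun i => B i) '' (sector I q : Set (Fin b))) ≤
      (Submodule.span (ZMod 2)
        ((fun i => kron A B i) '' (I : Set (Fin (a * b))))).comap L := by
    rw [Submodule.span_le]
    rintro _ ⟨j, hj, rfl⟩
    refine Submodule.subset_span ⟨finProdFinEquiv (q, j), mem_sector.1 hj, ?_⟩
    ext k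
    obtain ⟨⟨s, t⟩, rfl⟩ := finProdFinEquiv.surjective k
    simp only [L, LinearMap.coe_mk, AddHom.coe_mk, Equiv.symm_apply_apply, kron_apply]
  rw [← hyw, ← hLw]
  refine minDist_le (hsub hy) ?_
  rw [← hammingNorm_ne_zero_iff, hLw]
  exact mul_ne_zero (hammingNorm_ne_zero_iff.2 (hA q)) (hammingNorm_ne_zero_iff.2 hy0)

theorem exists_spec {p m : ℕ} (T : Matrix (Fin p) (Fin m) (ZMod 2)) {k : ℕ} (hk : k ≤ p) :
    ∃ R : Finset (Fin p), R.card = k ∧ minDist T R = spec T k := by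
  have hne : ((Finset.univ : Finset (Fin p)).powersetCard k).Nonempty :=
    Finset.powersetCard_nonempty.2 (by simpa using hk)
  obtain ⟨R, hR, h⟩ := Finset.exists_mem_eq_sup _ hne (minDist T)
  exact ⟨R, (Finset.mem_powersetCard.1 hR).2, h.symm⟩

theorem minDist_le_spec {p m : ℕ} (T : Matrix (Fin p) (Fin m) (ZMod 2)) (R : Finset (Fin p)) :
    minDist T R ≤ spec T R.card :=
  Finset.le_sup (f := minDist T) (Finset.mem_powersetCard.2 ⟨Finset.subset_univ _, rfl⟩)

/-- The optimal minimum distance `S_{T_N}(K)` of `T_N = T₂^{⊗n} ⊗ T_p` is always attained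
by an information set assembled sector-wise from optimal row sets of the kernel `T_p`. -/
theorem stmt10 (p n : ℕ) (Tp : Matrix (Fin p) (Fin p) (ZMod 2)) (hTp : IsUnit Tp)
    (K : ℕ) (hK1 : 1 ≤ K) (hK2 : K ≤ 2 ^ n * p) :
    ∃ R : Fin (2 ^ n) → Finset (Fin p),
      (∑ q, (R q).card) = K ∧
      (∀ q, (R q).card ≤ p) ∧
      (∀ q, (R q).Nonempty → minDist Tp (R q) = spec Tp (R q).card) ∧
      minDist (kron (kronPow T2 n) Tp)
        (Finset.univ.biUnion fun q : Fin (2 ^ n) =>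
          (R q).image fun j : Fin p =>
            (⟨(q : ℕ) * p + (j : ℕ), sector_lt q j⟩ : Fin (2 ^ n * p))) =
        spec (kron (kronPow T2 n) Tp) K := by
  have hB : ∀ j, Tp j ≠ 0 := fun j h =>
    (Matrix.isUnit_iff_isUnit_det _ |>.1 hTp).ne_zero
      (Matrix.det_eq_zero_of_row_eq_zero j fun i => congrFun h i)
  have hA := sectorBound_kronPow n
  obtain ⟨I, hIK, hI⟩ := exists_spec (kron (kronPow T2 n) Tp) hK2
  have hcard : ∀ q, (sector I q).card ≤ p := fun q => by
    simpa using Finset.card_le_univ (sector I q)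
  choose R hRcard hRspec using fun q => exists_spec Tp (hcard q)
  have hsum : ∑ q, (R q).card = K := by
    simp only [hRcard, sum_card_sector, hIK]
  refine ⟨R, hsum, fun q => (hRcard q).le.trans (hcard q),
    fun q _ => by rw [hRspec, hRcard], ?_⟩
  set J : Finset (Fin (2 ^ n * p)) := Finset.univ.biUnion fun q : Fin (2 ^ n) =>
          (R q).image fun j : Fin p =>
            (⟨(q : ℕ) * p + (j : ℕ), sector_lt q j⟩ : Fin (2 ^ n * p)) with hJ
  have hidx : ∀ (q : Fin (2 ^ n)) (j : Fin p),
      (⟨(q : ℕ) * p + (j : ℕ), sector_lt q j⟩ : Fin (2 ^ n * p)) = finProdFinEquiv (q, j) := by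
    intro q j
    ext
    simp [add_comm, mul_comm]
  have hJsec : ∀ q, sector J q = R q := by
    intro q
    ext j
    simp [mem_sector, hJ, hidx]
  have hJcard : J.card = K := by
    rw [← sum_card_sector, ← hsum]
    simp only [hJsec]
  apply le_antisymm
  · rw [← hJcard]
    exact minDist_le_spec _ J
  · have hJne : J.Nonempty := Finset.card_pos.1 (by omega)
    have hrows : ∀ k, kron (kronPow T2 n) Tp k ≠ 0 := by
      intro k
      obtain ⟨⟨q, j⟩, rfl⟩ := finProdFinEquiv.surjective k
      rw [← hammingNorm_ne_zero_iff, hammingNorm_kron_row]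
      exact mul_ne_zero (hammingNorm_ne_zero_iff.2 (hA.1 q)) (hammingNorm_ne_zero_iff.2 (hB j))
    obtain ⟨x, hx, hx0, hxw⟩ := exists_minDist hrows hJne
    obtain ⟨q, hq, hle⟩ := exists_sector_le hA Tp J hx hx0
    rw [hJsec] at hq hle
    have hIq : (sector I q).Nonempty := by
      rw [← Finset.card_pos, ← hRcard, Finset.card_pos]
      exact hq
    rw [← hxw, ← hI]
    refine (minDist_kron_le hA.1 hB I hIq).trans ((Nat.mul_le_mul_left _ ?_).trans hle)
    rw [hRspec]
    exact minDist_le_spec Tp (sector I q)
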